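/- Let G be a finite simple graph, let P be a set of simple paths in G, and let S be the set of vertices of G whose degree is not equal to two. For a vertex set C, let opt(C) denote the minimum cardinality of a set of vertices intersecting every path of P whose vertex set is contained in C. Then there is a minimum-cardinality set X of vertices of G intersecting every path in P such that for every connected component C of G − S, opt(V(C)) ≤ |X ∩ V(C)| ≤ opt(V(C)) + 1. -/

import Mathlib

/-- `hsOpt G P C` is `opt(C)`: the minimum cardinality of a set of vertices
intersecting every path of `P` whose vertex set is contained in `C`. -/
noncomputable def hsOpt {V : Type} [Fintype V] (G : SimpleGraph V)
    (P : Set (Σ u v : V, G.Walk u v)) (C : Set V) : ℕ :=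
  sInf {m : ℕ | ∃ Y : Finset V, Y.card = m ∧
    ∀ p ∈ P, (∀ x ∈ p.2.2.support, x ∈ C) → ∃ x ∈ Y, x ∈ p.2.2.support}

/-- The set of vertices of `G` lying in the connected component `C` of the induced
subgraph of `G` on `s`. -/
def inducedCompSet {V : Type} (G : SimpleGraph V) (s : Set V)
    (C : (G.induce s).ConnectedComponent) : Set V :=
  {v : V | ∃ h : v ∈ s, (G.induce s).connectedComponentMk ⟨v, h⟩ = C}

/-!
Exchange argument. Put `s = {v | G.degree v = 2}`, and among the minimum hitting sets take `X` with
as few vertices in `s` as possible. If `K` is a component of `G[s]` and `Y` hits the members of `P`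
inside `K`, then replacing `X ∩ K` by `Y` together with the outer boundary `∂K` gives a hitting set
again, because a walk that leaves `K` passes through `∂K`. Since `∂K` avoids `s`, the choice of `X`
yields `|X ∩ K| ≤ |Y| + (|∂K| - 1)`. Finally `|∂K| ≤ 2`: the degrees in `K` add up to at most
`2 |K|`, and a spanning tree of `G[K]` already accounts for `2 (|K| - 1)` of that sum.
-/

section OuterBoundary

variable {V : Type*} {G : SimpleGraph V} {K : Set V}

/-- The outer vertex boundary `∂K` of a vertex set `K`: the vertices outside `K` that have a
neighbour in `K`. -/
def outerBoundary (G : SimpleGraph V) (K : Set V) : Set V :=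
  {w | w ∉ K ∧ ∃ v ∈ K, G.Adj v w}

theorem exists_mem_support_mem_outerBoundary {u v a b : V} (p : G.Walk u v)
    (ha : a ∈ p.support) (haK : a ∈ K) (hb : b ∈ p.support) (hbK : b ∉ K) :
    ∃ w ∈ p.support, w ∈ outerBoundary G K := by
  classical
  by_cases huK : u ∈ K
  · obtain ⟨d, hd, hfst, hsnd⟩ := (p.takeUntil b hb).exists_boundary_dart K huK hbK
    exact ⟨d.snd, p.dart_snd_mem_support_of_mem_darts (p.darts_takeUntil_subset_darts hb hd),
      hsnd, d.fst, hfst, d.adj⟩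
  · obtain ⟨d, hd, hfst, hsnd⟩ :=
      (p.takeUntil a ha).exists_boundary_dart Kᶜ huK (Set.notMem_compl_iff.2 haK)
    exact ⟨d.fst, p.dart_fst_mem_support_of_mem_darts (p.darts_takeUntil_subset_darts ha hd),
      hfst, d.snd, Set.notMem_compl_iff.1 hsnd, d.adj.symm⟩

theorem degree_induce_add_card_neighborFinset_sdiff [DecidableEq V] [Fintype K] (v : K)
    [Fintype (G.neighborSet v)] [Fintype ((G.induce K).neighborSet v)] :
    (G.induce K).degree v + (G.neighborFinset v \ K.toFinset).card = G.degree v := by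
  have hinter : ((G.induce K).neighborFinset v).map (.subtype (· ∈ K)) =
      G.neighborFinset v ∩ K.toFinset := by
    ext w
    simp
  rw [← SimpleGraph.card_neighborFinset_eq_degree, ← SimpleGraph.card_neighborFinset_eq_degree,
    ← Finset.card_map, hinter, Finset.card_inter_add_card_sdiff]

theorem ncard_outerBoundary_le_sum_card_neighborFinset_sdiff [DecidableEq V]
    [G.LocallyFinite] [Fintype K] :
    (outerBoundary G K).ncard ≤ ∑ v : K, (G.neighborFinset v \ K.toFinset).card := by
  have hsub : outerBoundary G K ⊆
      ((Finset.univ : Finset K).biUnion fun v => G.neighborFinset v \ K.toFinset) := by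
    rintro w ⟨hwK, v, hvK, hvw⟩
    exact Finset.mem_biUnion.2 ⟨⟨v, hvK⟩, Finset.mem_univ _, by simp [hwK, hvw]⟩
  calc (outerBoundary G K).ncard
      ≤ ((Finset.univ : Finset K).biUnion fun v => G.neighborFinset v \ K.toFinset).card :=
        (Set.ncard_le_ncard hsub).trans_eq (Set.ncard_coe_finset _)
    _ ≤ ∑ v : K, (G.neighborFinset v \ K.toFinset).card := Finset.card_biUnion_le

theorem ncard_outerBoundary_add_two_mul_card_le [G.LocallyFinite] [Fintype K]
    (hK : (G.induce K).Connected) :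
    (outerBoundary G K).ncard + 2 * Fintype.card K ≤ ∑ v : K, G.degree v + 2 := by
  classical
  have hdeg : 2 * (G.induce K).edgeFinset.card + ∑ v : K, (G.neighborFinset v \ K.toFinset).card =
      ∑ v : K, G.degree v := by
    rw [← SimpleGraph.sum_degrees_eq_twice_card_edges, ← Finset.sum_add_distrib]
    exact Finset.sum_congr rfl fun v _ => degree_induce_add_card_neighborFinset_sdiff v
  have htree : Fintype.card K ≤ (G.induce K).edgeFinset.card + 1 := by
    simpa only [Nat.card_eq_fintype_card, SimpleGraph.edgeFinset_card] using
      hK.card_vert_le_card_edgeSet_add_one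
  have hboundary := ncard_outerBoundary_le_sum_card_neighborFinset_sdiff (G := G) (K := K)
  omega

theorem ncard_outerBoundary_le_two [G.LocallyFinite] [Finite K]
    (hK : (G.induce K).Connected) (hdeg : ∀ v ∈ K, G.degree v ≤ 2) :
    (outerBoundary G K).ncard ≤ 2 := by
  have := Fintype.ofFinite K
  have hsum : ∑ v : K, G.degree v ≤ Fintype.card K * 2 :=
    Finset.sum_le_card_nsmul _ _ _ fun v _ => hdeg v v.2
  have hboundary := ncard_outerBoundary_add_two_mul_card_le hK
  omega

end OuterBoundary

section InducedCompSet

variable {V : Type} (G : SimpleGraph V) (s : Set V) (C : (G.induce s).ConnectedComponent)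

theorem inducedCompSet_subset : inducedCompSet G s C ⊆ s :=
  fun _ ⟨hv, _⟩ => hv

theorem connected_induce_inducedCompSet : (G.induce (inducedCompSet G s C)).Connected := by
  let f : C.toSimpleGraph →g G.induce (inducedCompSet G s C) :=
    { toFun := fun v => ⟨v.1.1, v.1.2, v.2⟩
      map_rel' := fun h => h }
  exact C.connected_toSimpleGraph.map f fun ⟨v, hv, hvC⟩ => ⟨⟨⟨v, hv⟩, hvC⟩, rfl⟩

theorem disjoint_outerBoundary_inducedCompSet :
    Disjoint (outerBoundary G (inducedCompSet G s C)) s := by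
  rw [Set.disjoint_left]
  rintro w ⟨hwC, v, ⟨hv, rfl⟩, hvw⟩ hw
  have hadj : (G.induce s).Adj ⟨w, hw⟩ ⟨v, hv⟩ := hvw.symm
  exact hwC ⟨hw, SimpleGraph.ConnectedComponent.sound hadj.reachable⟩

end InducedCompSet

section Exchange

variable {α : Type*} [Finite α] {B K X Y s : Set α}

theorem ncard_sdiff_union_add_ncard_inter_le :
    (X \ K ∪ Y).ncard + (X ∩ K).ncard ≤ X.ncard + Y.ncard := by
  have hunion := Set.ncard_union_le (X \ K) Y
  have hX := Set.ncard_inter_add_ncard_sdiff_eq_ncard X K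
  omega

theorem ncard_sdiff_union_union_inter_add_ncard_inter_le (hKs : K ⊆ s) (hB : Disjoint B s) :
    ((X \ K ∪ Y ∪ B) ∩ s).ncard + (X ∩ K).ncard ≤ (X ∩ s).ncard + Y.ncard := by
  have hsub : (X \ K ∪ Y ∪ B) ∩ s ⊆ (X ∩ s) \ K ∪ Y := by
    rintro x ⟨(⟨hx, hxK⟩ | hx) | hx, hxs⟩
    · exact .inl ⟨⟨hx, hxs⟩, hxK⟩
    · exact .inr hx
    · exact absurd hxs (Set.disjoint_left.1 hB hx)
  have hXK : X ∩ s ∩ K = X ∩ K := by rw [Set.inter_assoc, Set.inter_eq_right.2 hKs]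
  calc ((X \ K ∪ Y ∪ B) ∩ s).ncard + (X ∩ K).ncard
      ≤ ((X ∩ s) \ K ∪ Y).ncard + (X ∩ s ∩ K).ncard := by
        rw [hXK]
        exact Nat.add_le_add_right (Set.ncard_le_ncard hsub) _
    _ ≤ (X ∩ s).ncard + Y.ncard := ncard_sdiff_union_add_ncard_inter_le

end Exchange

section HittingSet

variable {V : Type*} {G : SimpleGraph V} {P : Set (Σ u v : V, G.Walk u v)} {K s X Y : Set V}

/-- `X` is a hitting set for `P`: it contains a vertex of every walk in `P`. -/
def IsHittingSet (P : Set (Σ u v : V, G.Walk u v)) (X : Set V) : Prop :=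
  ∀ p ∈ P, ∃ x ∈ X, x ∈ p.2.2.support

/-- `X` is a hitting set for `P` of minimum cardinality. Cardinality is measured by `Set.ncard`,
which is `0` on infinite sets, so this is only meaningful on a finite vertex type. -/
def IsMinimumHittingSet (P : Set (Σ u v : V, G.Walk u v)) (X : Set V) : Prop :=
  IsHittingSet P X ∧ ∀ Y, IsHittingSet P Y → X.ncard ≤ Y.ncard

/-- The walks of `P` all of whose vertices lie in `K`; `hsOpt G P K` is the hitting number of
this subfamily. -/
def walksWithin (P : Set (Σ u v : V, G.Walk u v)) (K : Set V) : Set (Σ u v : V, G.Walk u v) :=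
  {p ∈ P | ∀ x ∈ p.2.2.support, x ∈ K}

theorem isHittingSet_univ : IsHittingSet P Set.univ :=
  fun p _ => ⟨p.1, Set.mem_univ _, p.2.2.start_mem_support⟩

theorem IsHittingSet.inter_walksWithin (hX : IsHittingSet P X) :
    IsHittingSet (walksWithin P K) (X ∩ K) := by
  rintro p ⟨hp, hpK⟩
  obtain ⟨x, hx, hxp⟩ := hX p hp
  exact ⟨x, ⟨hx, hpK x hxp⟩, hxp⟩

theorem IsHittingSet.exchange (hX : IsHittingSet P X) (hY : IsHittingSet (walksWithin P K) Y) :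
    IsHittingSet P (X \ K ∪ Y ∪ outerBoundary G K) := by
  intro p hp
  by_cases hpK : ∀ x ∈ p.2.2.support, x ∈ K
  · obtain ⟨y, hy, hyp⟩ := hY p ⟨hp, hpK⟩
    exact ⟨y, .inl (.inr hy), hyp⟩
  · push Not at hpK
    obtain ⟨b, hbp, hbK⟩ := hpK
    obtain ⟨x, hx, hxp⟩ := hX p hp
    by_cases hxK : x ∈ K
    · obtain ⟨w, hwp, hw⟩ := exists_mem_support_mem_outerBoundary p.2.2 hxp hxK hbp hbK
      exact ⟨w, .inr hw, hwp⟩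
    · exact ⟨x, .inl (.inl ⟨hx, hxK⟩), hxp⟩

variable [Finite V]

theorem exists_isMinimumHittingSet (P : Set (Σ u v : V, G.Walk u v)) :
    ∃ X, IsMinimumHittingSet P X :=
  Set.exists_min_image {X | IsHittingSet P X} Set.ncard (Set.toFinite _) ⟨_, isHittingSet_univ⟩

theorem exists_isMinimumHittingSet_forall_ncard_inter_le (P : Set (Σ u v : V, G.Walk u v))
    (s : Set V) :
    ∃ X, IsMinimumHittingSet P X ∧
      ∀ Z, IsMinimumHittingSet P Z → (X ∩ s).ncard ≤ (Z ∩ s).ncard :=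
  Set.exists_min_image {X | IsMinimumHittingSet P X} (fun X => (X ∩ s).ncard) (Set.toFinite _)
    (exists_isMinimumHittingSet P)

/- The subtraction is truncated: for `∂K = ∅` the bound is `|Y|`. -/
theorem IsMinimumHittingSet.ncard_inter_le (hX : IsMinimumHittingSet P X)
    (hXs : ∀ Z, IsMinimumHittingSet P Z → (X ∩ s).ncard ≤ (Z ∩ s).ncard)
    (hKs : K ⊆ s) (hboundary : Disjoint (outerBoundary G K) s)
    (hY : IsHittingSet (walksWithin P K) Y) :
    (X ∩ K).ncard ≤ Y.ncard + ((outerBoundary G K).ncard - 1) := by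
  by_contra! hlarge
  let Z := X \ K ∪ Y ∪ outerBoundary G K
  have hZ : IsHittingSet P Z := hX.1.exchange hY
  have hZX : Z.ncard ≤ X.ncard := by
    have hunion : Z.ncard ≤ (X \ K ∪ Y).ncard + (outerBoundary G K).ncard :=
      Set.ncard_union_le _ _
    have hswap := ncard_sdiff_union_add_ncard_inter_le (X := X) (K := K) (Y := Y)
    omega
  have hZmin : IsMinimumHittingSet P Z := ⟨hZ, fun W hW => hZX.trans (hX.2 W hW)⟩
  have hZs : (Z ∩ s).ncard + (X ∩ K).ncard ≤ (X ∩ s).ncard + Y.ncard :=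
    ncard_sdiff_union_union_inter_add_ncard_inter_le hKs hboundary
  have hXZs := hXs Z hZmin
  omega

end HittingSet

section Budget

variable {V : Type} [Fintype V] {G : SimpleGraph V}

theorem isLeast_hsOpt (P : Set (Σ u v : V, G.Walk u v)) (K : Set V) :
    IsLeast (Set.ncard '' {Y | IsHittingSet (walksWithin P K) Y}) (hsOpt G P K) := by
  have heq : {m : ℕ | ∃ Y : Finset V, Y.card = m ∧
      ∀ p ∈ P, (∀ x ∈ p.2.2.support, x ∈ K) → ∃ x ∈ Y, x ∈ p.2.2.support} =
      Set.ncard '' {Y | IsHittingSet (walksWithin P K) Y} := by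
    ext m
    constructor
    · rintro ⟨Y, rfl, hY⟩
      exact ⟨Y, fun p hp => hY p hp.1 hp.2, Set.ncard_coe_finset Y⟩
    · rintro ⟨Y, hY, rfl⟩
      lift Y to Finset V using Y.toFinite
      exact ⟨Y, (Set.ncard_coe_finset Y).symm, fun p hp hpK => hY p ⟨hp, hpK⟩⟩
  rw [hsOpt, heq]
  exact ⟨Nat.sInf_mem ⟨_, _, isHittingSet_univ, rfl⟩, fun _ => Nat.sInf_le⟩

theorem IsHittingSet.hsOpt_le_ncard_inter {P : Set (Σ u v : V, G.Walk u v)} {X : Set V}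
    (hX : IsHittingSet P X) (K : Set V) : hsOpt G P K ≤ (X ∩ K).ncard :=
  (isLeast_hsOpt P K).2 ⟨_, hX.inter_walksWithin, rfl⟩

theorem exists_isMinimumHittingSet_ncard_inter_inducedCompSet_le
    (P : Set (Σ u v : V, G.Walk u v)) (s : Set V) :
    ∃ X, IsMinimumHittingSet P X ∧ ∀ C : (G.induce s).ConnectedComponent,
      (X ∩ inducedCompSet G s C).ncard ≤ hsOpt G P (inducedCompSet G s C) +
        ((outerBoundary G (inducedCompSet G s C)).ncard - 1) := by
  obtain ⟨X, hX, hXs⟩ := exists_isMinimumHittingSet_forall_ncard_inter_le P s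
  refine ⟨X, hX, fun C => ?_⟩
  obtain ⟨Y, hY, hYcard⟩ := (isLeast_hsOpt P (inducedCompSet G s C)).1
  rw [← hYcard]
  exact hX.ncard_inter_le hXs (inducedCompSet_subset G s C)
    (disjoint_outerBoundary_inducedCompSet G s C) hY

end Budget

theorem stmt_11_general {V : Type} [Fintype V] (G : SimpleGraph V) [DecidableRel G.Adj]
    (P : Set (Σ u v : V, G.Walk u v)) {s : Set V} (hs : ∀ v ∈ s, G.degree v ≤ 2) :
    ∃ X : Finset V,
      (∀ p ∈ P, ∃ x ∈ X, x ∈ p.2.2.support) ∧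
      (∀ Y : Finset V, (∀ p ∈ P, ∃ x ∈ Y, x ∈ p.2.2.support) → X.card ≤ Y.card) ∧
      (∀ C : (G.induce s).ConnectedComponent,
        hsOpt G P (inducedCompSet G s C) ≤ ((↑X : Set V) ∩ inducedCompSet G s C).ncard ∧
          ((↑X : Set V) ∩ inducedCompSet G s C).ncard ≤
            hsOpt G P (inducedCompSet G s C) + 1) := by
  obtain ⟨X, ⟨hX, hXmin⟩, hXbudget⟩ := exists_isMinimumHittingSet_ncard_inter_inducedCompSet_le P s
  lift X to Finset V using X.toFinite
  refine ⟨X, hX, fun Y hY => ?_, fun C => ⟨hX.hsOpt_le_ncard_inter _, (hXbudget C).trans ?_⟩⟩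
  · simpa only [Set.ncard_coe_finset] using hXmin Y hY
  · have hboundary : (outerBoundary G (inducedCompSet G s C)).ncard ≤ 2 :=
      ncard_outerBoundary_le_two (connected_induce_inducedCompSet G s C)
        fun v hv => hs v (inducedCompSet_subset G s C hv)
    omega

/-- **Lemma: budgets on paths.** Let `G` be a finite simple graph,
`P` a set of simple paths in `G`, and `S` the set of vertices of degree `≠ 2`, so
that `G − S` is the induced subgraph on `{v | degree v = 2}`.  There is a
minimum-cardinality set `X` of vertices intersecting every path of `P` such that
for every connected component `C` of `G − S` we have
`opt(C) ≤ |X ∩ V(C)| ≤ opt(C) + 1`. -/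
theorem stmt_11 {V : Type} [Fintype V] [DecidableEq V] (G : SimpleGraph V)
    [DecidableRel G.Adj]
    (P : Set (Σ u v : V, G.Walk u v)) (hP : ∀ p ∈ P, p.2.2.IsPath) :
    ∃ X : Finset V,
      (∀ p ∈ P, ∃ x ∈ X, x ∈ p.2.2.support) ∧
      (∀ Y : Finset V, (∀ p ∈ P, ∃ x ∈ Y, x ∈ p.2.2.support) → X.card ≤ Y.card) ∧
      (∀ C : (G.induce {v : V | G.degree v = 2}).ConnectedComponent,
        hsOpt G P (inducedCompSet G {v : V | G.degree v = 2} C) ≤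
            ((↑X : Set V) ∩ inducedCompSet G {v : V | G.degree v = 2} C).ncard ∧
          ((↑X : Set V) ∩ inducedCompSet G {v : V | G.degree v = 2} C).ncard ≤
            hsOpt G P (inducedCompSet G {v : V | G.degree v = 2} C) + 1) :=
  stmt_11_general G P fun _ hv => hv.le
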